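/- If f ∈ C¹_b(ℝⁿ) with m = sup_x |∇f(x)|, then the Luxemburg norm in the exponential Orlicz space satisfies ‖f − ∫ f(y)M(y)dy‖_{cosh−1, M} ≤ (π/(2√(2 log 2)))·m. -/

import Mathlib

open Real MeasureTheory
open scoped ENNReal

noncomputable section

/-- The standard `n`-dimensional Gaussian density. -/
def gaussM (n : ℕ) (x : EuclideanSpace ℝ (Fin n)) : ℝ :=
  (2 * π) ^ (-(n : ℝ) / 2) * exp (-‖x‖ ^ 2 / 2)

/-- The standard Gaussian measure `M(x)dx` on `ℝⁿ`. -/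
def gaussMeasure (n : ℕ) : Measure (EuclideanSpace ℝ (Fin n)) :=
  volume.withDensity fun x => ENNReal.ofReal (gaussM n x)

/-- The conjugate Young function `(cosh−1)_*`. -/
def conjY (y : ℝ) : ℝ := ∫ t in (0:ℝ)..y, arsinh t

/-- Luxemburg norm for the Young function `Φ` with respect to a measure `μ`. -/
def luxNorm {E : Type*} [MeasurableSpace E] (Φ : ℝ → ℝ) (μ : Measure E)
    (g : E → ℝ) : ℝ :=
  sInf {ρ : ℝ | 0 < ρ ∧ ∫ x, Φ (g x / ρ) ∂μ ≤ 1 ∧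
    Integrable (fun x => Φ (g x / ρ)) μ}

section Helpers
open ProbabilityTheory

lemma gaussM_nonneg (n : ℕ) (x : EuclideanSpace ℝ (Fin n)) : 0 ≤ gaussM n x := by
  unfold gaussM; positivity

lemma gaussM_meas (n : ℕ) : Measurable (gaussM n) := by
  unfold gaussM; fun_prop

lemma gauss_const (n : ℕ) :
    ((2 * π) ^ (-(n : ℝ) / 2) : ℝ) * (π / (1 / 2)) ^ ((n : ℝ) / 2) = 1 := by
  have : π / (1 / 2) = 2 * π := by ring
  rw [this, ← Real.rpow_add (by positivity)]
  have : -(n : ℝ) / 2 + n / 2 = 0 := by ring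
  rw [this, Real.rpow_zero]

lemma gaussM_integral (n : ℕ) : ∫ x, gaussM n x = 1 := by
  unfold gaussM
  rw [integral_const_mul]
  have h := GaussianFourier.integral_rexp_neg_mul_sq_norm (V := EuclideanSpace ℝ (Fin n))
    (b := 1 / 2) (by norm_num)
  have h2 : ∀ x : EuclideanSpace ℝ (Fin n), -‖x‖ ^ 2 / 2 = -(1 / 2) * ‖x‖ ^ 2 := fun x => by ring
  simp_rw [h2]
  rw [h]
  simpa using gauss_const n

lemma gaussM_integrable (n : ℕ) : Integrable (gaussM n) := by
  by_contra h
  have := gaussM_integral n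
  rw [integral_undef h] at this
  norm_num at this

instance gaussMeasure_prob (n : ℕ) : IsProbabilityMeasure (gaussMeasure n) := by
  constructor
  unfold gaussMeasure
  rw [withDensity_apply _ MeasurableSet.univ, Measure.restrict_univ,
    ← ofReal_integral_eq_lintegral_ofReal (gaussM_integrable n)
      (Filter.Eventually.of_forall (gaussM_nonneg n)), gaussM_integral]
  simp

lemma gaussMeasure_eq (n : ℕ) :
    gaussMeasure n = stdGaussian (EuclideanSpace ℝ (Fin n)) := by
  apply Measure.ext_of_charFun
  ext t
  rw [charFun_stdGaussian, charFun_apply]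
  unfold gaussMeasure
  rw [integral_withDensity_eq_integral_toReal_smul (by
    exact (gaussM_meas n).ennreal_ofReal) (by simp)]
  simp_rw [ENNReal.toReal_ofReal (gaussM_nonneg n _)]
  have h := GaussianFourier.integral_cexp_neg_mul_sq_norm_add (V := EuclideanSpace ℝ (Fin n))
    (b := 1 / 2) (by norm_num) Complex.I t
  have h2 : ∀ x : EuclideanSpace ℝ (Fin n),
      gaussM n x • Complex.exp ((inner ℝ x t : ℝ) * Complex.I) =
      (((2 * π) ^ (-(n : ℝ) / 2) : ℝ) : ℂ) *
        Complex.exp (-(1 / 2) * ‖x‖ ^ 2 + Complex.I * (inner ℝ t x : ℝ)) := by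
    intro x
    unfold gaussM
    rw [Complex.real_smul, Complex.ofReal_mul, mul_assoc, Complex.ofReal_exp, ← Complex.exp_add,
      real_inner_comm]
    congr 2
    push_cast
    ring
  simp_rw [h2]
  rw [integral_const_mul, h]
  have h3 : ((π : ℂ) / (1 / 2)) ^ ((Module.finrank ℝ (EuclideanSpace ℝ (Fin n)) : ℂ) / 2) =
      (((π / (1 / 2)) ^ ((n : ℝ) / 2) : ℝ) : ℂ) := by
    rw [Complex.ofReal_cpow (by positivity)]
    simp
  rw [h3, ← mul_assoc, ← Complex.ofReal_mul, gauss_const]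
  simp
  congr 1
  ring

variable {E : Type*} [NormedAddCommGroup E] [InnerProductSpace ℝ E] [FiniteDimensional ℝ E]
  [MeasurableSpace E] [BorelSpace E]

lemma lint_exp_dual (L : StrongDual ℝ E) :
    ∫⁻ x, ENNReal.ofReal (exp (L x)) ∂(stdGaussian E) = ENNReal.ofReal (exp (‖L‖ ^ 2 / 2)) := by
  have hmap := IsGaussian.map_eq_gaussianReal (μ := stdGaussian E) L
  rw [integral_strongDual_stdGaussian, variance_dual_stdGaussian] at hmap
  have hm := mgf_gaussianReal hmap 1
  have hint : Integrable (fun x => exp (L x)) (stdGaussian E) := by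
    by_contra h
    have : mgf L (stdGaussian E) 1 = 0 := by
      unfold mgf
      simp only [one_mul]
      exact integral_undef h
    rw [this] at hm
    exact (exp_pos _).ne hm
  rw [← ofReal_integral_eq_lintegral_ofReal hint
    (Filter.Eventually.of_forall fun x => (exp_pos _).le)]
  congr 1
  simp only [mgf, one_mul] at hm
  rw [hm]
  simp

lemma lint_rot {f : E → ℝ} (hf : ContDiff ℝ 1 f) {m : ℝ} (hm : ∀ x, ‖fderiv ℝ f x‖ ≤ m)
    (c θ : ℝ) :
    ∫⁻ p : E × E, ENNReal.ofReal (exp (c * fderiv ℝ f (cos θ • p.1 + sin θ • p.2)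
      (-sin θ • p.1 + cos θ • p.2))) ∂((stdGaussian E).prod (stdGaussian E)) ≤
      ENNReal.ofReal (exp (c ^ 2 * m ^ 2 / 2)) := by
  have hrot := IsGaussian.map_rotation_eq_self_of_forall_strongDual_eq_zero
    (μ := stdGaussian E) integral_strongDual_stdGaussian θ
  have hc : Continuous (fderiv ℝ f) := hf.continuous_fderiv (by norm_num)
  have hF : Measurable (fun p : E × E => ENNReal.ofReal (exp (c * fderiv ℝ f p.1 p.2))) := by
    have : Continuous (fun p : E × E => fderiv ℝ f p.1 p.2) :=
      (hc.comp continuous_fst).clm_apply continuous_snd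
    apply Measurable.ennreal_ofReal
    exact (Real.continuous_exp.comp (continuous_const.mul this)).measurable
  have h1 := lintegral_map (μ := (stdGaussian E).prod (stdGaussian E)) hF
    (ContinuousLinearMap.rotation (E := E) θ).continuous.measurable
  rw [hrot] at h1
  simp only [ContinuousLinearMap.rotation_apply] at h1
  rw [← h1, lintegral_prod _ hF.aemeasurable]
  calc _ ≤ ∫⁻ x : E, ENNReal.ofReal (exp (c ^ 2 * m ^ 2 / 2)) ∂(stdGaussian E) := by
        apply lintegral_mono
        intro x
        have := lint_exp_dual (c • fderiv ℝ f x)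
        simp only [smul_apply, smul_eq_mul] at this
        simp only
        rw [this]
        apply ENNReal.ofReal_le_ofReal
        rw [norm_smul, mul_pow, Real.norm_eq_abs, sq_abs]
        have := hm x
        gcongr
    _ = _ := by simp

/-- The uniform probability measure on `(0, π/2]`. -/
def nuA : Measure ℝ := ENNReal.ofReal (2 / π) • volume.restrict (Set.Ioc 0 (π / 2))

instance nuA_prob : IsProbabilityMeasure nuA := by
  constructor
  simp only [nuA, Measure.smul_apply, Measure.restrict_apply_univ, Real.volume_Ioc, smul_eq_mul]
  rw [← ENNReal.ofReal_mul (by positivity)]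
  have : 2 / π * (π / 2 - 0) = 1 := by field_simp; ring
  rw [this]; simp

lemma nuA_int {g : ℝ → ℝ} (hg : Continuous g) : Integrable g nuA := by
  unfold nuA
  apply Integrable.smul_measure _ (by simp)
  exact (hg.integrableOn_Ioc)

lemma nuA_integral (g : ℝ → ℝ) : ∫ θ, g θ ∂nuA = 2 / π * ∫ θ in (0:ℝ)..(π / 2), g θ := by
  unfold nuA
  rw [integral_smul_measure, intervalIntegral.integral_of_le (by positivity),
    ENNReal.toReal_ofReal (by positivity), smul_eq_mul]

lemma jensen_pt {f : E → ℝ} (hf : ContDiff ℝ 1 f) (s : ℝ) (p : E × E) :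
    ENNReal.ofReal (exp (s * (f p.2 - f p.1))) ≤
      ∫⁻ θ, ENNReal.ofReal (exp ((s * (π / 2)) * fderiv ℝ f (cos θ • p.1 + sin θ • p.2)
      (-sin θ • p.1 + cos θ • p.2))) ∂nuA := by
  have hc : Continuous (fderiv ℝ f) := hf.continuous_fderiv (by norm_num)
  have hd : ∀ θ : ℝ, HasDerivAt (fun θ : ℝ => f (cos θ • p.1 + sin θ • p.2))
      (fderiv ℝ f (cos θ • p.1 + sin θ • p.2) (-sin θ • p.1 + cos θ • p.2)) θ := by
    intro θ
    have h1 : HasDerivAt (fun θ : ℝ => cos θ • p.1 + sin θ • p.2)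
        (-sin θ • p.1 + cos θ • p.2) θ :=
      ((hasDerivAt_cos θ).smul_const p.1).add ((hasDerivAt_sin θ).smul_const p.2)
    exact ((hf.differentiable (by norm_num) _).hasFDerivAt).comp_hasDerivAt θ h1
  have hcont : Continuous (fun θ : ℝ => fderiv ℝ f (cos θ • p.1 + sin θ • p.2)
      (-sin θ • p.1 + cos θ • p.2)) :=
    (hc.comp (by fun_prop)).clm_apply (by fun_prop)
  have hftc := intervalIntegral.integral_eq_sub_of_hasDerivAt (a := 0) (b := π / 2)
    (fun θ _ => hd θ) (hcont.intervalIntegrable _ _)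
  simp only [cos_pi_div_two, sin_pi_div_two, cos_zero, sin_zero, zero_smul, one_smul, zero_add,
    add_zero] at hftc
  have hg : Continuous (fun θ : ℝ => (s * (π / 2)) * fderiv ℝ f (cos θ • p.1 + sin θ • p.2)
      (-sin θ • p.1 + cos θ • p.2)) := continuous_const.mul hcont
  have hj := convexOn_exp.map_integral_le (μ := nuA) Real.continuous_exp.continuousOn isClosed_univ
    (Filter.Eventually.of_forall fun _ => Set.mem_univ _) (nuA_int hg)
    (nuA_int (Real.continuous_exp.comp hg))
  rw [nuA_integral, intervalIntegral.integral_const_mul, hftc] at hj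
  have hgi := nuA_int (Real.continuous_exp.comp hg)
  simp only [Function.comp_def] at hgi
  rw [← ofReal_integral_eq_lintegral_ofReal hgi
    (Filter.Eventually.of_forall fun x => (exp_pos _).le)]
  apply ENNReal.ofReal_le_ofReal
  refine le_trans (le_of_eq ?_) hj
  congr 1
  field_simp

lemma pisier {f : E → ℝ} (hf : ContDiff ℝ 1 f) {m : ℝ} (hm : ∀ x, ‖fderiv ℝ f x‖ ≤ m) (s : ℝ) :
    ∫⁻ p : E × E, ENNReal.ofReal (exp (s * (f p.2 - f p.1)))
      ∂((stdGaussian E).prod (stdGaussian E)) ≤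
      ENNReal.ofReal (exp ((s * (π / 2)) ^ 2 * m ^ 2 / 2)) := by
  have hc : Continuous (fderiv ℝ f) := hf.continuous_fderiv (by norm_num)
  refine (lintegral_mono (jensen_pt hf s)).trans ?_
  rw [lintegral_lintegral_swap]
  · refine (lintegral_mono (fun θ => lint_rot hf hm _ θ)).trans ?_
    simp
  · apply Measurable.aemeasurable
    apply Measurable.ennreal_ofReal
    apply Continuous.measurable
    apply Real.continuous_exp.comp
    apply continuous_const.mul
    exact (hc.comp (by fun_prop)).clm_apply (by fun_prop)

lemma f_integrable {f : E → ℝ} (hf : ContDiff ℝ 1 f) {m : ℝ} (hm : ∀ x, ‖fderiv ℝ f x‖ ≤ m) :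
    Integrable f (stdGaussian E) := by
  have hb : ∀ x, ‖f x‖ ≤ ‖f 0‖ + m * ‖x‖ := by
    intro x
    have := Convex.norm_image_sub_le_of_norm_fderiv_le (𝕜 := ℝ) (f := f) (s := Set.univ) (x := 0)
      (y := x) (fun x _ => hf.differentiable (by norm_num) x) (fun x _ => hm x) convex_univ
      (Set.mem_univ _) (Set.mem_univ _)
    rw [sub_zero] at this
    have h2 := norm_add_le (f 0) (f x - f 0)
    rw [add_sub_cancel] at h2
    linarith
  have hid : Integrable (fun x : E => x) (stdGaussian E) := IsGaussian.integrable_fun_id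
  exact ((integrable_const _).add (hid.norm.const_mul m)).mono'
    hf.continuous.aestronglyMeasurable (Filter.Eventually.of_forall hb)

lemma main_mgf {f : E → ℝ} (hf : ContDiff ℝ 1 f) {m : ℝ} (hm : ∀ x, ‖fderiv ℝ f x‖ ≤ m) (s : ℝ) :
    Integrable (fun x => exp (s * (f x - ∫ y, f y ∂(stdGaussian E)))) (stdGaussian E) ∧
    ∫ x, exp (s * (f x - ∫ y, f y ∂(stdGaussian E))) ∂(stdGaussian E) ≤
      exp ((s * (π / 2)) ^ 2 * m ^ 2 / 2) := by
  have hfi := f_integrable hf hm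
  have hfc := hf.continuous
  have hp := pisier hf hm s
  have hcont : Continuous (fun p : E × E => exp (s * (f p.2 - f p.1))) := by fun_prop
  have hI : Integrable (fun p : E × E => exp (s * (f p.2 - f p.1)))
      ((stdGaussian E).prod (stdGaussian E)) := by
    refine ⟨hcont.aestronglyMeasurable, ?_⟩
    rw [hasFiniteIntegral_iff_ofReal (Filter.Eventually.of_forall fun x => (exp_pos _).le)]
    exact hp.trans_lt ENNReal.ofReal_lt_top
  have hle : ∫ p : E × E, exp (s * (f p.2 - f p.1)) ∂((stdGaussian E).prod (stdGaussian E)) ≤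
      exp ((s * (π / 2)) ^ 2 * m ^ 2 / 2) := by
    rw [← ofReal_integral_eq_lintegral_ofReal hI
      (Filter.Eventually.of_forall fun x => (exp_pos _).le)] at hp
    exact (ENNReal.ofReal_le_ofReal_iff (exp_pos _).le).1 hp
  have hpt : ∀ᵐ y ∂(stdGaussian E), exp (s * (f y - ∫ y, f y ∂(stdGaussian E))) ≤
      ∫ x, exp (s * (f y - f x)) ∂(stdGaussian E) := by
    filter_upwards [hI.prod_left_ae] with y hy
    have hi : Integrable (fun x => s * (f y - f x)) (stdGaussian E) :=
      ((integrable_const _).sub hfi).const_mul s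
    have hj := convexOn_exp.map_integral_le (μ := stdGaussian E) Real.continuous_exp.continuousOn
      isClosed_univ (Filter.Eventually.of_forall fun _ => Set.mem_univ _) hi hy
    rw [integral_const_mul, integral_sub (integrable_const _) hfi] at hj
    simpa using hj
  have hR := hI.integral_prod_right
  have hL : Integrable (fun x => exp (s * (f x - ∫ y, f y ∂(stdGaussian E)))) (stdGaussian E) := by
    refine hR.mono' (Continuous.aestronglyMeasurable (by fun_prop)) ?_
    filter_upwards [hpt] with y hy
    rwa [Real.norm_eq_abs, abs_of_pos (exp_pos _)]
  refine ⟨hL, ?_⟩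
  calc _ ≤ _ := integral_mono_ae hL hR hpt
    _ = _ := (integral_prod_symm _ hI).symm
    _ ≤ _ := hle

lemma lux_pos {n : ℕ} (f : EuclideanSpace ℝ (Fin n) → ℝ)
    (hf : ContDiff ℝ 1 f) (m : ℝ) (hm : ∀ x, ‖fderiv ℝ f x‖ ≤ m) (hpos : 0 < m) :
    luxNorm (fun u => cosh u - 1) (gaussMeasure n)
        (fun x => f x - ∫ y, f y ∂(gaussMeasure n)) ≤
      π / (2 * Real.sqrt (2 * log 2)) * m := by
  rw [gaussMeasure_eq]
  have hlog : 0 < 2 * log 2 := by have := Real.log_pos (by norm_num : (1:ℝ) < 2); linarith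
  have hsq : 0 < Real.sqrt (2 * log 2) := Real.sqrt_pos.2 hlog
  set ρ := π / (2 * Real.sqrt (2 * log 2)) * m with hρ
  have hρpos : 0 < ρ := by positivity
  have hK : exp ((ρ⁻¹ * (π / 2)) ^ 2 * m ^ 2 / 2) = 2 := by
    have h1 : ρ⁻¹ * (π / 2) * m = Real.sqrt (2 * log 2) := by
      rw [hρ]; field_simp
    have : (ρ⁻¹ * (π / 2)) ^ 2 * m ^ 2 / 2 = log 2 := by
      rw [← mul_pow, h1, Real.sq_sqrt hlog.le]; ring
    rw [this, Real.exp_log (by norm_num)]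
  obtain ⟨i1, b1⟩ := main_mgf hf hm ρ⁻¹
  obtain ⟨i2, b2⟩ := main_mgf hf hm (-ρ⁻¹)
  have : (-ρ⁻¹ * (π / 2)) ^ 2 = (ρ⁻¹ * (π / 2)) ^ 2 := by ring
  rw [this, hK] at b2
  rw [hK] at b1
  have heq : (fun x => cosh ((f x - ∫ y, f y ∂(stdGaussian (EuclideanSpace ℝ (Fin n)))) / ρ) - 1) =
      fun x => (exp (ρ⁻¹ * (f x - ∫ y, f y ∂(stdGaussian (EuclideanSpace ℝ (Fin n))))) +
        exp (-ρ⁻¹ * (f x - ∫ y, f y ∂(stdGaussian (EuclideanSpace ℝ (Fin n)))))) / 2 - 1 := by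
    ext x
    rw [Real.cosh_eq, div_eq_inv_mul (f x - _) ρ, neg_mul]
  unfold luxNorm
  apply csInf_le ⟨0, fun r hr => hr.1.le⟩
  refine ⟨hρpos, ?_, ?_⟩
  · simp only
    rw [heq, integral_sub ((i1.fun_add i2).div_const 2) (integrable_const _), integral_div,
      integral_add i1 i2, integral_const, probReal_univ, one_smul]
    linarith
  · simp only
    rw [heq]
    exact ((i1.fun_add i2).div_const 2).sub (integrable_const _)

end Helpers

/-- if `f ∈ C¹_b(ℝⁿ)` with `|∇f| ≤ m` everywhere, then
`‖f − ∫fdM‖_{cosh−1,M} ≤ (π/(2√(2 log 2)))·m`. -/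
theorem dispersion_exponential {n : ℕ} (f : EuclideanSpace ℝ (Fin n) → ℝ)
    (hf : ContDiff ℝ 1 f) (m : ℝ) (hm : ∀ x, ‖fderiv ℝ f x‖ ≤ m) :
    luxNorm (fun u => cosh u - 1) (gaussMeasure n)
        (fun x => f x - ∫ y, f y ∂(gaussMeasure n)) ≤
      π / (2 * Real.sqrt (2 * log 2)) * m := by
  have h0 : 0 ≤ m := (norm_nonneg _).trans (hm 0)
  refine le_of_forall_pos_le_add fun ε hε => ?_
  have hlog : 0 < 2 * log 2 := by have := Real.log_pos (by norm_num : (1:ℝ) < 2); linarith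
  have hsq : 0 < Real.sqrt (2 * log 2) := Real.sqrt_pos.2 hlog
  set C := π / (2 * Real.sqrt (2 * log 2)) with hC
  have hCpos : 0 < C := by positivity
  have hd : 0 < ε / C := by positivity
  have h := lux_pos f hf (m + ε / C) (fun x => (hm x).trans (by linarith)) (by linarith)
  refine h.trans (le_of_eq ?_)
  rw [← hC, mul_add, mul_div_cancel₀ _ hCpos.ne']
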